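/- Let V be a real inner product space, let ξ ∈ V with ⟪ξ, ξ⟫ = 1, and set η(X) := ⟪X, ξ⟫. Let W be a real vector space, h : V → V → W a symmetric ℝ-bilinear map satisfying h(X, ξ) = 0 for all X ∈ V, R : V → V → V → V an ℝ-trilinear map with R(X, Y)ξ = η(X) Y − η(Y) X for all X, Y ∈ V, and P : V → V → (W →ₗ W) an ℝ-bilinear map into linear endomorphisms of W. If for all X, Y, Z, U ∈ V: P(X,Y)(h(Z,U)) − h(R(X,Y)Z, U) − h(Z, R(X,Y)U) = L·(⟪Y,Z⟫ h(X,U) − ⟪X,Z⟫ h(Y,U) + ⟪Y,U⟫ h(X,Z) − ⟪X,U⟫ h(Y,Z)) holds for some L ∈ ℝ, then either h = 0 or L = 1. -/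

import Mathlib

open RealInnerProductSpace

/-!
Write `(X ∧ Y) Z = g(Y, Z) X - g(X, Z) Y`. The curvature assumption says that `R(X, Y)` and
`-(X ∧ Y)` agree at `ξ`, while pseudo-parallelism says that the derivation action of the
curvature on `h` is `L` times that of `-(X ∧ Y)`. As `h(·, ξ) = 0`, evaluating a derivation action
at `(Z, ξ)` leaves only the term where the endomorphism hits `ξ`, so
`h(Z, R(X, Y)ξ) = L h(Z, R(X, Y)ξ)`. For `X = ξ` the vector `R(ξ, Y)ξ` is `Y` up to a multiple
of `ξ`, hence `h(Z, Y) = L h(Z, Y)`.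
-/

section PseudoParallel

variable {K V W : Type*} [CommRing K] [AddCommGroup V] [Module K V] [AddCommGroup W] [Module K W]

/-- The action of endomorphisms `B` of `W` and `A` of `V` on a `W`-valued bilinear map by
derivations. With `B` the normal curvature `R^⊥(X, Y)` and `A` the curvature `R(X, Y)`, it is the
action of the curvature on the second fundamental form. -/
def derivationAction (B : Module.End K W) (A : Module.End K V) (h : V →ₗ[K] V →ₗ[K] W) :
    V →ₗ[K] V →ₗ[K] W :=
  h.compr₂ B - h ∘ₗ A - h.compl₂ A

/-- The endomorphism `X ∧_g Y` of a space with bilinear form `g`, the model of curvature of constant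
sectional curvature `1`. -/
def metricWedge (g : LinearMap.BilinForm K V) (X Y : V) : Module.End K V :=
  (g Y).smulRight X - (g X).smulRight Y

/-- The Tachibana tensor `(Z, U) ↦ Q(g, h)(Z, U; X, Y)`, with the sign for which it is the
derivation action of `-(X ∧_g Y)`, the trivial endomorphism acting on the normal space. -/
def tachibana (g : LinearMap.BilinForm K V) (h : V →ₗ[K] V →ₗ[K] W) (X Y : V) :
    V →ₗ[K] V →ₗ[K] W :=
  derivationAction 0 (-metricWedge g X Y) h

/-- Deszcz pseudo-parallelism of a second fundamental form `h` with factor `L`, at a point, for the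
metric `g`, normal curvature `P` and tangential curvature `R`. -/
def IsPseudoParallel (g : LinearMap.BilinForm K V) (P : V → V → Module.End K W)
    (R : V → V → Module.End K V) (h : V →ₗ[K] V →ₗ[K] W) (L : K) : Prop :=
  ∀ X Y, derivationAction (P X Y) (R X Y) h = L • tachibana g h X Y

variable {g : LinearMap.BilinForm K V} {h : V →ₗ[K] V →ₗ[K] W}

lemma derivationAction_apply (B : Module.End K W) (A : Module.End K V) (Z U : V) :
    derivationAction B A h Z U = B (h Z U) - h (A Z) U - h Z (A U) :=
  rfl

lemma metricWedge_apply (X Y Z : V) : metricWedge g X Y Z = g Y Z • X - g X Z • Y :=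
  rfl

lemma derivationAction_apply_of_apply_eq_zero {ξ : V} (hξ : ∀ X, h X ξ = 0)
    (B : Module.End K W) (A : Module.End K V) (Z : V) :
    derivationAction B A h Z ξ = -h Z (A ξ) := by
  rw [derivationAction_apply, hξ, hξ, map_zero, sub_zero, zero_sub]

lemma tachibana_apply (hsymm : ∀ X Y, h X Y = h Y X) (X Y Z U : V) :
    tachibana g h X Y Z U =
      g Y Z • h X U - g X Z • h Y U + g Y U • h X Z - g X U • h Y Z := by
  simp only [tachibana, derivationAction_apply, LinearMap.neg_apply, metricWedge_apply, map_neg,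
    map_sub, map_smul, LinearMap.sub_apply, LinearMap.smul_apply, LinearMap.zero_apply,
    hsymm Z]
  abel

lemma isPseudoParallel_iff_forall_apply {P : V → V → Module.End K W} {R : V → V → Module.End K V}
    {L : K} (hsymm : ∀ X Y, h X Y = h Y X) :
    IsPseudoParallel g P R h L ↔ ∀ X Y Z U,
      P X Y (h Z U) - h (R X Y Z) U - h Z (R X Y U) =
        L • (g Y Z • h X U - g X Z • h Y U + g Y U • h X Z - g X U • h Y Z) := by
  simp only [IsPseudoParallel, LinearMap.ext_iff₂, derivationAction_apply, LinearMap.smul_apply,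
    tachibana_apply hsymm]

namespace IsPseudoParallel

variable {P : V → V → Module.End K W} {R : V → V → Module.End K V} {L : K} {ξ : V}

lemma apply_curvature_eq_smul (hpar : IsPseudoParallel g P R h L) (hhξ : ∀ X, h X ξ = 0)
    {X Y : V} (hRξ : R X Y ξ = g X ξ • Y - g Y ξ • X) (Z : V) :
    h Z (R X Y ξ) = L • h Z (R X Y ξ) := by
  have hwedge : (-metricWedge g X Y) ξ = R X Y ξ := by
    rw [LinearMap.neg_apply, metricWedge_apply, neg_sub, hRξ]
  have hZξ := LinearMap.congr_fun₂ (hpar X Y) Z ξ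
  rwa [LinearMap.smul_apply, LinearMap.smul_apply, tachibana,
    derivationAction_apply_of_apply_eq_zero hhξ, derivationAction_apply_of_apply_eq_zero hhξ,
    hwedge, smul_neg, neg_inj] at hZξ

lemma apply_eq_smul (hpar : IsPseudoParallel g P R h L) (hξ : g ξ ξ = 1) (hhξ : ∀ X, h X ξ = 0)
    {Y : V} (hRξ : R ξ Y ξ = g ξ ξ • Y - g Y ξ • ξ) (Z : V) : h Z Y = L • h Z Y := by
  have hcurv : h Z (R ξ Y ξ) = h Z Y := by
    rw [hRξ, hξ, one_smul, map_sub, map_smul, hhξ, smul_zero, sub_zero]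
  simpa only [hcurv] using hpar.apply_curvature_eq_smul hhξ hRξ Z

end IsPseudoParallel

theorem stmt_14_general [IsDomain K] [Module.IsTorsionFree K W]
    {P : V → V → Module.End K W} {R : V → V → Module.End K V} {L : K} {ξ : V}
    (hξ : g ξ ξ = 1) (hhξ : ∀ X, h X ξ = 0)
    (hRξ : ∀ X Y, R X Y ξ = g X ξ • Y - g Y ξ • X) (hpar : IsPseudoParallel g P R h L) :
    h = 0 ∨ L = 1 := by
  refine or_iff_not_imp_right.mpr fun hL ↦ LinearMap.ext₂ fun Z Y ↦ ?_
  have hZY : (L - 1) • h Z Y = 0 := by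
    rw [sub_smul, one_smul, ← hpar.apply_eq_smul hξ hhξ (hRξ ξ Y), sub_self]
  exact (smul_eq_zero.mp hZY).resolve_left (sub_ne_zero.mpr hL)

end PseudoParallel

/-- Dichotomy underlying Theorems 3.2 and 3.3: if the second fundamental form `h`
of a contact CR-submanifold of a Kenmotsu manifold is Deszcz pseudo parallel with
function `L`, then either `h = 0` (totally geodesic) or `L = 1`. -/
theorem stmt_14 {V W : Type*} [NormedAddCommGroup V] [InnerProductSpace ℝ V]
    [AddCommGroup W] [Module ℝ W]
    (ξ : V) (hξ : ⟪ξ, ξ⟫ = 1) (η : V → ℝ) (hη : ∀ X, η X = ⟪X, ξ⟫)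
    (h : V →ₗ[ℝ] V →ₗ[ℝ] W) (hsymm : ∀ X Y : V, h X Y = h Y X)
    (hhξ : ∀ X : V, h X ξ = 0)
    (R : V →ₗ[ℝ] V →ₗ[ℝ] V →ₗ[ℝ] V)
    (hRξ : ∀ X Y : V, R X Y ξ = η X • Y - η Y • X)
    (P : V →ₗ[ℝ] V →ₗ[ℝ] W →ₗ[ℝ] W)
    (L : ℝ)
    (hyp : ∀ X Y Z U : V,
      P X Y (h Z U) - h (R X Y Z) U - h Z (R X Y U)
        = L • (⟪Y, Z⟫ • h X U - ⟪X, Z⟫ • h Y U + ⟪Y, U⟫ • h X Z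
            - ⟪X, U⟫ • h Y Z)) :
    h = 0 ∨ L = 1 := by
  obtain rfl : η = fun X ↦ ⟪X, ξ⟫ := funext hη
  exact stmt_14_general (g := innerₗ V) (P := (P · ·)) (R := (R · ·)) hξ hhξ hRξ
    ((isPseudoParallel_iff_forall_apply hsymm).mpr hyp)
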